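/- Let p_1, p_2, p_3, p_4 be four distinct points of P^2 with no three of them collinear, and let Z = 2p_1 + p_2 + p_3 + p_4 be the fat points scheme with a double point at p_1 and simple points at p_2, p_3, p_4. Then the Waldschmidt constant satisfies α̂(I(Z)) ≥ 5/2. -/

import Mathlib

noncomputable section

open MvPolynomial

/-- `alpha J` is the least degree of a nonzero homogeneous form in the ideal `J`. -/
def alpha {kk : Type*} [Field kk] {σ : Type*} (J : Ideal (MvPolynomial σ kk)) : ℕ :=
  sInf {d : ℕ | ∃ f ∈ J, f ≠ 0 ∧ MvPolynomial.IsHomogeneous f d}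

/-- The homogeneous (prime) ideal of the point of `ℙ²` represented by the nonzero vector
`p`, generated by the linear forms vanishing at `p`. -/
def pointIdeal {kk : Type*} [Field kk] (p : Fin 3 → kk) : Ideal (MvPolynomial (Fin 3) kk) :=
  Ideal.span {f | f.IsHomogeneous 1 ∧ MvPolynomial.eval p f = 0}

/-- Two nonzero vectors represent the same point of `ℙ²`. -/
def projEq {kk : Type*} [Field kk] (p q : Fin 3 → kk) : Prop :=
  ∃ c : kk, c ≠ 0 ∧ q = c • p

/-!
A form `F` of degree `d` vanishing to order `mᵢ` at four points in general position satisfies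
`∑ mᵢ ≤ 2d`, by Bézout against a conic through the four points that is not contained in `F = 0`.
Such a conic is written down directly. Choose representatives `vᵢ` of the points with `∑ vᵢ = 0`,
and independent indeterminates `tᵢ`. The curve `φ(T) = ∑ᵢ (∏_{l ≠ i} (T - t_l)) vᵢ` passes through
`vᵢ` at `T = tᵢ`, has degree at most `2` because its cubic coefficient is `∑ vᵢ = 0`, and has
quadratic coefficient `∑ tᵢ vᵢ`, a generic point of the plane. Hence the coefficient
`F(∑ tᵢ vᵢ)` of `T ^ (2d)` in `F(φ(T))` is nonzero, while `(T - tᵢ) ^ mᵢ` divides `F(φ(T))` for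
each `i`; comparing degrees gives the inequality.
-/

section HomogeneousSubstitution

variable {R A σ : Type*} [CommSemiring R] [CommSemiring A] [Algebra R A]
  {F : MvPolynomial σ R} {d e : ℕ}

theorem aeval_smul_of_isHomogeneous (hF : F.IsHomogeneous d) (c : A) (x : σ → A) :
    aeval (c • x) F = c ^ d * aeval x F := by
  rw [aeval_def, aeval_def, eval₂_eq, eval₂_eq, Finset.mul_sum]
  refine Finset.sum_congr rfl fun s hs => ?_
  simp only [Pi.smul_apply, smul_eq_mul, mul_pow, Finset.prod_mul_distrib,
    Finset.prod_pow_eq_pow_sum, ← hF.degree_eq_sum_deg_support hs]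
  exact mul_left_comm _ _ _

theorem natDegree_aeval_le_of_isHomogeneous (hF : F.IsHomogeneous d) {φ : σ → Polynomial A}
    (hφ : ∀ j, (φ j).natDegree ≤ e) : (aeval φ F).natDegree ≤ d * e := by
  rw [← aeval_map_algebraMap A]
  exact aeval_natDegree_le _ (hF.map _).totalDegree_le φ hφ

theorem coeff_prod_pow_of_natDegree_le {φ : σ → Polynomial A} (hφ : ∀ j, (φ j).natDegree ≤ e)
    (s : Finset σ) (k : σ → ℕ) :
    (∏ j ∈ s, φ j ^ k j).coeff ((∑ j ∈ s, k j) * e) = ∏ j ∈ s, (φ j).coeff e ^ k j := by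
  classical
  induction s using Finset.induction_on with
  | empty => simp
  | insert j s hj ih =>
    have hdeg : (∏ j ∈ s, φ j ^ k j).natDegree ≤ (∑ j ∈ s, k j) * e := by
      rw [Finset.sum_mul]
      exact (Polynomial.natDegree_prod_le _ _).trans
        (Finset.sum_le_sum fun j _ => Polynomial.natDegree_pow_le_of_le _ (hφ j))
    rw [Finset.prod_insert hj, Finset.prod_insert hj, Finset.sum_insert hj, add_mul,
      Polynomial.coeff_mul_add_eq_of_natDegree_le
        (Polynomial.natDegree_pow_le_of_le _ (hφ j)) hdeg,
      Polynomial.coeff_pow_of_natDegree_le (hφ j), ih]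

theorem coeff_aeval_of_isHomogeneous (hF : F.IsHomogeneous d) {φ : σ → Polynomial A}
    (hφ : ∀ j, (φ j).natDegree ≤ e) :
    (aeval φ F).coeff (d * e) = aeval (fun j => (φ j).coeff e) F := by
  rw [aeval_def, aeval_def, eval₂_eq, eval₂_eq, Polynomial.finsetSum_coeff]
  refine Finset.sum_congr rfl fun s hs => ?_
  rw [hF.degree_eq_sum_deg_support hs, Polynomial.algebraMap_apply, Polynomial.coeff_C_mul,
    coeff_prod_pow_of_natDegree_le hφ]

end HomogeneousSubstitution

section RationalNormalCurve

variable {A σ : Type*} [CommRing A] {n : ℕ}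

/-- The parametrised curve `T ↦ ∑ i, (∏ l ≠ i, (T - t l)) • v i`, coordinate by coordinate; it meets
the point `[v i]` at `T = t i`. The representatives `v i` of `n + 2` points of `ℙⁿ` are meant to be
scaled so that their linear relation reads `∑ i, v i = 0`: the coefficient of `T ^ (n + 1)` then
vanishes, and what remains is the rational normal curve of degree `n` through these points. -/
def rationalNormalCurve (v : Fin (n + 2) → σ → A) (t : Fin (n + 2) → A) (j : σ) : Polynomial A :=
  ∑ i, Polynomial.C (v i j) * Lagrange.nodal (Finset.univ.erase i) t

variable (v : Fin (n + 2) → σ → A) (t : Fin (n + 2) → A)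

theorem eval_rationalNormalCurve_node (i : Fin (n + 2)) (j : σ) :
    (rationalNormalCurve v t j).eval (t i) =
      (Lagrange.nodal (Finset.univ.erase i) t).eval (t i) * v i j := by
  rw [rationalNormalCurve, Polynomial.eval_finsetSum, Finset.sum_eq_single i]
  · rw [Polynomial.eval_mul, Polynomial.eval_C, mul_comm]
  · intro l _ hl
    rw [Polynomial.eval_mul, Lagrange.eval_nodal_at_node (by simpa using hl.symm), mul_zero]
  · simp

theorem natDegree_nodal_erase_le (i : Fin (n + 2)) :
    (Lagrange.nodal (Finset.univ.erase i) t).natDegree ≤ n + 1 := by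
  nontriviality A
  simp [Lagrange.natDegree_nodal]

theorem coeff_nodal_erase_top (i : Fin (n + 2)) :
    (Lagrange.nodal (Finset.univ.erase i) t).coeff (n + 1) = 1 := by
  nontriviality A
  simpa [Polynomial.leadingCoeff, Lagrange.natDegree_nodal] using
    (Lagrange.nodal_monic (s := Finset.univ.erase i) (v := t)).leadingCoeff

theorem coeff_nodal_erase_pred (i : Fin (n + 2)) :
    (Lagrange.nodal (Finset.univ.erase i) t).coeff n = t i - ∑ l, t l := by
  rw [Lagrange.nodal_eq]
  simpa [Finset.sum_erase_eq_sub] using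
    Polynomial.prod_X_sub_C_coeff_card_pred (Finset.univ.erase i) t (by simp)

variable {v}

theorem natDegree_rationalNormalCurve_le (hv : ∑ i, v i = 0) (j : σ) :
    (rationalNormalCurve v t j).natDegree ≤ n := by
  have hle : (rationalNormalCurve v t j).natDegree ≤ n + 1 :=
    Polynomial.natDegree_sum_le_of_forall_le _ _ fun i _ =>
      (Polynomial.natDegree_C_mul_le _ _).trans (natDegree_nodal_erase_le t i)
  refine Polynomial.natDegree_le_pred hle ?_
  simpa [rationalNormalCurve, coeff_nodal_erase_top] using congrFun hv j

theorem coeff_rationalNormalCurve (hv : ∑ i, v i = 0) (j : σ) :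
    (rationalNormalCurve v t j).coeff n = ∑ i, t i * v i j := by
  have hvj : ∑ i, v i j = 0 := by simpa using congrFun hv j
  simp only [rationalNormalCurve, Polynomial.finsetSum_coeff, Polynomial.coeff_C_mul,
    coeff_nodal_erase_pred, mul_sub, Finset.sum_sub_distrib, ← Finset.sum_mul, hvj, zero_mul,
    sub_zero]
  exact Finset.sum_congr rfl fun i _ => mul_comm _ _

end RationalNormalCurve

theorem bind₁_toMvPolynomial_injective {R σ ι : Type*} [CommRing R] [Finite σ] [Fintype ι]
    {N : Matrix σ ι R} (hN : Function.Surjective N.mulVec) :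
    Function.Injective (bind₁ N.toMvPolynomial) := by
  classical
  cases nonempty_fintype σ
  obtain ⟨B, hB⟩ := Matrix.mulVec_surjective_iff_exists_right_inverse.1 hN
  refine Function.LeftInverse.injective (g := bind₁ B.toMvPolynomial) fun F => ?_
  rw [bind₁_bind₁]
  simp only [← Matrix.toMvPolynomial_mul, hB, Matrix.toMvPolynomial_one, bind₁_X_left,
    AlgHom.id_apply]

section GenericRationalNormalCurve

variable {R σ : Type*} [CommRing R] {n d : ℕ}

/-- The rational normal curve through the points `v i` whose parameters are independent
indeterminates: the generic member of the family of such curves. -/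
def genericRationalNormalCurve (v : Fin (n + 2) → σ → R) :
    σ → Polynomial (MvPolynomial (Fin (n + 2)) R) :=
  rationalNormalCurve (fun i => C ∘ v i) X

variable {v : Fin (n + 2) → σ → R}

theorem sum_C_comp_eq_zero (hv : ∑ i, v i = 0) :
    ∑ i, (C ∘ v i : σ → MvPolynomial (Fin (n + 2)) R) = 0 := by
  ext1 j
  have hvj : ∑ i, v i j = 0 := by simpa using congrFun hv j
  rw [Finset.sum_apply, Pi.zero_apply, ← C_0, ← hvj, map_sum]
  rfl

theorem natDegree_genericRationalNormalCurve_le (hv : ∑ i, v i = 0) (j : σ) :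
    (genericRationalNormalCurve v j).natDegree ≤ n :=
  natDegree_rationalNormalCurve_le X (sum_C_comp_eq_zero hv) j

theorem coeff_genericRationalNormalCurve (hv : ∑ i, v i = 0) (j : σ) :
    (genericRationalNormalCurve v j).coeff n = (Matrix.of v).transpose.toMvPolynomial j := by
  rw [genericRationalNormalCurve, coeff_rationalNormalCurve X (sum_C_comp_eq_zero hv)]
  exact Finset.sum_congr rfl fun i _ => (mul_comm _ _).trans C_mul_X_eq_monomial

theorem aeval_genericRationalNormalCurve_ne_zero [Finite σ] (hv : ∑ i, v i = 0)
    (hspan : Submodule.span R (Set.range v) = ⊤) {F : MvPolynomial σ R} (hF : F.IsHomogeneous d)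
    (hF0 : F ≠ 0) : aeval (genericRationalNormalCurve v) F ≠ 0 := by
  classical
  have hsurj : Function.Surjective (Matrix.of v).transpose.mulVec := by
    rw [← Matrix.coe_mulVecLin, ← LinearMap.range_eq_top, Matrix.range_mulVecLin]
    exact hspan
  intro hzero
  have hlead := coeff_aeval_of_isHomogeneous hF (natDegree_genericRationalNormalCurve_le hv)
  rw [hzero, Polynomial.coeff_zero, funext (coeff_genericRationalNormalCurve hv)] at hlead
  exact hF0 ((map_eq_zero_iff _ (bind₁_toMvPolynomial_injective hsurj)).1 hlead.symm)

end GenericRationalNormalCurve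

theorem sum_le_natDegree_of_pow_dvd {A ι : Type*} [CommRing A] [IsDomain A] [Fintype ι]
    {P : Polynomial A} (hP : P ≠ 0) {t : ι → A} (ht : Function.Injective t) {m : ι → ℕ}
    (hdvd : ∀ i, (Polynomial.X - Polynomial.C (t i)) ^ m i ∣ P) :
    ∑ i, m i ≤ P.natDegree := by
  classical
  calc ∑ i, m i ≤ ∑ i, P.roots.count (t i) := Finset.sum_le_sum fun i _ => by
        rw [Polynomial.count_roots]
        exact (Polynomial.le_rootMultiplicity_iff hP).2 (hdvd i)
    _ = ∑ a ∈ Finset.univ.map ⟨t, ht⟩, P.roots.count a := by simp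
    _ ≤ ∑ a ∈ Finset.univ.map ⟨t, ht⟩ ∪ P.roots.toFinset, P.roots.count a :=
        Finset.sum_le_sum_of_subset Finset.subset_union_left
    _ = P.roots.card := Multiset.sum_count_eq_card fun a ha => by simp_all
    _ ≤ P.natDegree := P.card_roots'

section LinearForms

variable {K σ : Type*} [Field K]

theorem exists_linearForm_eval_eq_dotProduct [Fintype σ] {v : σ → K} (hv : v ≠ 0) :
    ∃ g : MvPolynomial σ K, g ≠ 0 ∧ g.IsHomogeneous 1 ∧ ∀ x, eval x g = v ⬝ᵥ x := by
  classical
  have heval (x : σ → K) : eval x ((Matrix.replicateRow Unit v).toMvPolynomial ()) = v ⬝ᵥ x :=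
    Matrix.toMvPolynomial_eval_eq_apply _ _ _
  refine ⟨_, fun h => hv ?_, Matrix.toMvPolynomial_isHomogeneous _ (), heval⟩
  ext j
  simpa [h] using (heval (Pi.single j 1)).symm

theorem linearIndependent_of_not_exists_linearForm [Finite σ] {q : σ → σ → K}
    (hq : ¬ ∃ g : MvPolynomial σ K, g ≠ 0 ∧ g.IsHomogeneous 1 ∧ ∀ i, eval (q i) g = 0) :
    LinearIndependent K q := by
  classical
  cases nonempty_fintype σ
  change LinearIndependent K (Matrix.of q).row
  rw [Matrix.linearIndependent_rows_iff_isUnit, Matrix.isUnit_iff_isUnit_det, isUnit_iff_ne_zero]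
  intro hdet
  obtain ⟨v, hv, hqv⟩ := Matrix.exists_mulVec_eq_zero_iff.2 hdet
  obtain ⟨g, hg0, hg1, hg⟩ := exists_linearForm_eval_eq_dotProduct hv
  exact hq ⟨g, hg0, hg1, fun i => by
    rw [hg, dotProduct_comm]
    exact congrFun hqv i⟩

end LinearForms

theorem exists_relation_forall_ne_zero {K V : Type*} [Field K] [AddCommGroup V] [Module K V]
    [FiniteDimensional K V] {n : ℕ} (hV : Module.finrank K V = n) {p : Fin (n + 1) → V}
    (hp : ∀ i : Fin (n + 1), LinearIndependent K (p ∘ i.succAbove)) :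
    ∃ w : Fin (n + 1) → K, (∀ i, w i ≠ 0) ∧ ∑ i, w i • p i = 0 := by
  have hker : LinearMap.ker (Fintype.linearCombination K p) ≠ ⊥ :=
    LinearMap.ker_ne_bot_of_finrank_lt (by simp [hV])
  obtain ⟨w, hw, hw0⟩ := Submodule.exists_mem_ne_zero_of_ne_bot hker
  rw [LinearMap.mem_ker, Fintype.linearCombination_apply] at hw
  refine ⟨w, fun i hi => hw0 ?_, hw⟩
  rw [Fin.sum_univ_succAbove _ i, hi, zero_smul, zero_add] at hw
  have hrest := Fintype.linearIndependent_iff.1 (hp i) _ hw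
  ext l
  exact Fin.succAboveCases i hi hrest l

theorem span_range_smul_eq_top {K V : Type*} [Field K] [AddCommGroup V] [Module K V]
    [FiniteDimensional K V] {n : ℕ} (hV : Module.finrank K V = n) {p : Fin (n + 1) → V}
    (hp : LinearIndependent K (p ∘ Fin.succ)) {w : Fin (n + 1) → K} (hw : ∀ i, w i ≠ 0) :
    Submodule.span K (Set.range fun i => w i • p i) = ⊤ := by
  rw [eq_top_iff, ← hp.span_eq_top_of_card_eq_finrank' (by simp [hV]), Submodule.span_le]
  rintro _ ⟨i, rfl⟩
  rw [Function.comp_apply, SetLike.mem_coe, ← inv_smul_smul₀ (hw i.succ) (p i.succ)]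
  exact Submodule.smul_mem _ _ (Submodule.subset_span ⟨i.succ, rfl⟩)

section PointIdeal

variable {K : Type*} [Field K] {F : MvPolynomial (Fin 3) K} {d : ℕ}

theorem pow_dvd_aeval_of_mem_pointIdeal_pow {A : Type*} [CommRing A] [Algebra K A]
    {p : Fin 3 → K} {φ : Fin 3 → Polynomial A} {t s : A}
    (hφ : ∀ j, (φ j).eval t = s * algebraMap K A (p j)) {m : ℕ} (hF : F ∈ pointIdeal p ^ m) :
    (Polynomial.X - Polynomial.C t) ^ m ∣ aeval φ F := by
  have hmap : (pointIdeal p).map (aeval φ) ≤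
      Ideal.span {Polynomial.X - Polynomial.C t} := by
    rw [pointIdeal, Ideal.map_span, Ideal.span_le]
    rintro _ ⟨f, ⟨hf, hfp⟩, rfl⟩
    rw [SetLike.mem_coe, Ideal.mem_span_singleton, Polynomial.dvd_iff_isRoot, Polynomial.IsRoot]
    have hφt : (fun j => (φ j).eval t) = s • (algebraMap K A ∘ p) := funext hφ
    calc (aeval φ f).eval t = aeval (fun j => (φ j).eval t) f := by
          exact comp_aeval_apply φ ((Polynomial.aeval t).restrictScalars K) f
      _ = s ^ 1 * algebraMap K A (eval p f) := by
          rw [hφt, aeval_smul_of_isHomogeneous hf, aeval_algebraMap_apply, aeval_eq_eval]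
      _ = 0 := by rw [hfp, map_zero, mul_zero]
  rw [← Ideal.mem_span_singleton, ← Ideal.span_singleton_pow]
  refine Ideal.pow_right_mono hmap m ?_
  rw [← Ideal.map_pow]
  exact Ideal.mem_map_of_mem _ hF

theorem sum_le_degree_mul_two_of_mem_pointIdeal_pow {p : Fin 4 → Fin 3 → K}
    (hp : ∀ i : Fin 4, LinearIndependent K (p ∘ i.succAbove)) (hF : F.IsHomogeneous d)
    (hF0 : F ≠ 0) {m : Fin 4 → ℕ} (hFm : ∀ i, F ∈ pointIdeal (p i) ^ m i) :
    ∑ i, m i ≤ d * 2 := by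
  obtain ⟨w, hw, hsum⟩ := exists_relation_forall_ne_zero (by simp) hp
  have hspan : Submodule.span K (Set.range fun i => w i • p i) = ⊤ :=
    span_range_smul_eq_top (by simp) (hp 0) hw
  have hdvd (i : Fin 4) : (Polynomial.X - Polynomial.C (X i)) ^ m i ∣
      aeval (genericRationalNormalCurve fun i => w i • p i) F :=
    pow_dvd_aeval_of_mem_pointIdeal_pow (fun j => by
      rw [genericRationalNormalCurve, eval_rationalNormalCurve_node, Function.comp_apply,
        Pi.smul_apply, smul_eq_mul, map_mul, ← mul_assoc, algebraMap_eq]) (hFm i)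
  calc ∑ i, m i ≤ (aeval (genericRationalNormalCurve fun i => w i • p i) F).natDegree :=
        sum_le_natDegree_of_pow_dvd (aeval_genericRationalNormalCurve_ne_zero hsum hspan hF hF0)
          X_injective hdvd
    _ ≤ d * 2 :=
        natDegree_aeval_le_of_isHomogeneous hF (natDegree_genericRationalNormalCurve_le hsum)

theorem exists_form_mem_iInf_pointIdeal_pow {ι : Type*} [Finite ι] (p : ι → Fin 3 → K)
    (m : ι → ℕ) :
    ∃ d, ∃ f ∈ ⨅ i, pointIdeal (p i) ^ m i, f ≠ 0 ∧ f.IsHomogeneous d := by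
  cases nonempty_fintype ι
  have hline (i : ι) : ∃ g ∈ pointIdeal (p i), g ≠ 0 ∧ g.IsHomogeneous 1 := by
    have hker : LinearMap.ker (dotProductBilin K K (p i)) ≠ ⊥ :=
      LinearMap.ker_ne_bot_of_finrank_lt (by simp)
    obtain ⟨v, hv, hv0⟩ := Submodule.exists_mem_ne_zero_of_ne_bot hker
    obtain ⟨g, hg0, hg1, hg⟩ := exists_linearForm_eval_eq_dotProduct hv0
    refine ⟨g, Ideal.subset_span ⟨hg1, ?_⟩, hg0, hg1⟩
    rw [hg, dotProduct_comm]
    exact hv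
  choose g hgp hg0 hg1 using hline
  refine ⟨_, ∏ i, g i ^ m i, ?_, ?_, IsHomogeneous.prod _ _ _ fun i _ => (hg1 i).pow (m i)⟩
  · rw [Ideal.mem_iInf]
    exact fun i => Ideal.mem_of_dvd _ (Finset.dvd_prod_of_mem _ (Finset.mem_univ i))
      (Ideal.pow_mem_pow (hgp i) _)
  · exact Finset.prod_ne_zero_iff.2 fun i _ => pow_ne_zero _ (hg0 i)

end PointIdeal

theorem waldschmidt_ge_of_general_position_general {kk : Type*} [Field kk]
    (p : Fin 4 → Fin 3 → kk) (m : Fin 4 → ℕ)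
    (hncol : ∀ i j l : Fin 4, i ≠ j → i ≠ l → j ≠ l →
      ¬ ∃ g : MvPolynomial (Fin 3) kk, g ≠ 0 ∧ g.IsHomogeneous 1 ∧
        eval (p i) g = 0 ∧ eval (p j) g = 0 ∧ eval (p l) g = 0) :
    (⨅ k : ℕ+, (alpha (⨅ i, pointIdeal (p i) ^ ((k : ℕ) * m i)) : ℝ) / ((k : ℕ) : ℝ)) ≥
      (∑ i, m i : ℕ) / 2 := by
  have hindep (i : Fin 4) : LinearIndependent kk (p ∘ i.succAbove) := by
    refine linearIndependent_of_not_exists_linearForm fun ⟨g, hg0, hg1, hg⟩ => ?_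
    refine hncol (i.succAbove 0) (i.succAbove 1) (i.succAbove 2) ?_ ?_ ?_
      ⟨g, hg0, hg1, hg 0, hg 1, hg 2⟩ <;> simp
  refine le_ciInf fun k => ?_
  obtain ⟨F, hFmem, hF0, hF⟩ :=
    Nat.sInf_mem (exists_form_mem_iInf_pointIdeal_pow p fun i => (k : ℕ) * m i)
  rw [Ideal.mem_iInf] at hFmem
  have hbound := sum_le_degree_mul_two_of_mem_pointIdeal_pow hindep hF hF0 hFmem
  rw [← Finset.mul_sum] at hbound
  rw [div_le_div_iff₀ two_pos (by exact_mod_cast k.pos), mul_comm]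
  exact_mod_cast hbound

/-- Let `p 0, p 1, p 2, p 3` be four distinct points of `ℙ²` with no three
of them collinear, and let `Z = 2·p 0 + p 1 + p 2 + p 3` be the fat points scheme with a
double point at `p 0` and simple points elsewhere.  Then `α̂(I(Z)) ≥ 5/2`. -/
theorem waldschmidt_ge_of_general_position
    {kk : Type*} [Field kk] [IsAlgClosed kk]
    (p : Fin 4 → (Fin 3 → kk)) (hp0 : ∀ i, p i ≠ 0)
    (hdist : ∀ i j, i ≠ j → ¬ projEq (p i) (p j))
    (hncol : ∀ i j l : Fin 4, i ≠ j → i ≠ l → j ≠ l →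
      ¬ ∃ g : MvPolynomial (Fin 3) kk, g ≠ 0 ∧ g.IsHomogeneous 1 ∧
        MvPolynomial.eval (p i) g = 0 ∧ MvPolynomial.eval (p j) g = 0 ∧
        MvPolynomial.eval (p l) g = 0) :
    (⨅ k : ℕ+, (alpha (⨅ i : Fin 4,
        pointIdeal (p i) ^ ((k : ℕ) * ![2, 1, 1, 1] i)) : ℝ) / ((k : ℕ) : ℝ)) ≥ 5 / 2 := by
  simpa [Fin.sum_univ_four, show (2 + 1 + 1 + 1 : ℝ) = 5 by norm_num] using
    waldschmidt_ge_of_general_position_general p ![2, 1, 1, 1] hncol
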